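/- Fix D ∈ ℍ^{m×n}, Ω ⊆ Fin m × Fin n, and λ > 0. Let Z^k = (A^k, B^k, X^k) satisfy the LRQD recurrences (X^k_{ij} = D_{ij} on Ω and = (A^k·B^k)_{ij} off Ω; A^{k+1} = (X^k·(B^k)ᴴ + λ·A^k)·(B^k·(B^k)ᴴ + λ·I)⁻¹; B^{k+1} = ((A^{k+1})ᴴ·A^{k+1} + λ·I)⁻¹·((A^{k+1})ᴴ·X^k + λ·B^k)), let f(A,B,X) = ½‖A·B − X‖_F². Assume {Z^k} is bounded and converges to Z#, and that the Kurdyka–Łojasiewicz inequality with exponent θ = 1/2 holds along the sequence: there exists μ > 0 such that |f(Z^k) − f(Z#)|^{1/2} ≤ μ·G(Z^k) for all k. Then the convergence is R-linear: there exist σ ∈ [0, 1) and β > 0 such that ‖Z^k − Z#‖ ≤ β·σ^k for all k. -/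

import Mathlib

open scoped Quaternion Matrix
open Filter

/-- The Frobenius norm of a quaternion matrix. -/
noncomputable def frob {m n : ℕ} (A : Matrix (Fin m) (Fin n) ℍ[ℝ]) : ℝ :=
  Real.sqrt (∑ i, ∑ j, ‖A i j‖ ^ 2)

/-- The norm of a triple (A, B, X). -/
noncomputable def tnorm {m r n : ℕ} (A : Matrix (Fin m) (Fin r) ℍ[ℝ])
    (B : Matrix (Fin r) (Fin n) ℍ[ℝ]) (X : Matrix (Fin m) (Fin n) ℍ[ℝ]) : ℝ :=
  Real.sqrt (frob A ^ 2 + frob B ^ 2 + frob X ^ 2)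

/-- The projected-gradient norm G(A,B,X). -/
noncomputable def pgnorm {m r n : ℕ} (Ω : Set (Fin m × Fin n)) [DecidablePred (· ∈ Ω)]
    (A : Matrix (Fin m) (Fin r) ℍ[ℝ]) (B : Matrix (Fin r) (Fin n) ℍ[ℝ])
    (X : Matrix (Fin m) (Fin n) ℍ[ℝ]) : ℝ :=
  Real.sqrt (frob ((A * B - X) * Bᴴ) ^ 2 + frob (Aᴴ * (A * B - X)) ^ 2 +
    ∑ p : Fin m × Fin n, if p ∈ Ω then 0 else ‖(X - A * B) p.1 p.2‖ ^ 2)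

/-! The scheme is a proximal alternating minimisation of `f`: each factor update solves a
`lam`-regularised least-squares problem exactly, so it decreases `f` by at least `lam` times the
squared increment, while re-imposing the data on `Ω` cannot increase `f`. By boundedness, the
increments of `X` and the projected gradient are of the order of the increments of `A` and `B`.
The Łojasiewicz inequality with exponent `1/2` then bounds the gap `f (Z k) - f (Z#)` by a multiple
of `f (Z k) - f (Z (k + 1))`, so the gap decays geometrically. The increments decay like its square
root, and the tail of a geometric series bounds the distance to the limit. -/

section DescentSequences

variable {f : ℕ → ℝ} {s K : ℝ}

theorem tendsto_of_abs_sub_le_mul_decrease (hf : Antitone f) (hbdd : BddBelow (Set.range f))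
    (hgap : ∀ k, |f k - s| ≤ K * (f k - f (k + 1))) : Tendsto f atTop (nhds s) := by
  have hlim := tendsto_atTop_ciInf hf hbdd
  have hdecrease : Tendsto (fun k => K * (f k - f (k + 1))) atTop (nhds 0) := by
    simpa using (hlim.sub (hlim.comp (tendsto_add_atTop_nat 1))).const_mul K
  exact tendsto_iff_norm_sub_tendsto_zero.2
    (squeeze_zero (fun _ => norm_nonneg _) hgap hdecrease)

theorem sub_le_geometric_of_sub_le_mul_decrease (hK : 1 ≤ K)
    (hgap : ∀ k, f k - s ≤ K * (f k - f (k + 1))) (k : ℕ) :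
    f k - s ≤ (f 0 - s) * (1 - K⁻¹) ^ k := by
  have hK₀ : 0 < K := one_pos.trans_le hK
  have hrate : 0 ≤ 1 - K⁻¹ := sub_nonneg.2 (inv_le_one_of_one_le₀ hK)
  have contract : ∀ k, f (k + 1) - s ≤ (1 - K⁻¹) * (f k - s) := fun k => by
    have : K⁻¹ * (f k - s) ≤ f k - f (k + 1) := (inv_mul_le_iff₀ hK₀).2 (hgap k)
    linarith
  induction k with
  | zero => simp
  | succ k ih =>
    calc f (k + 1) - s ≤ (1 - K⁻¹) * (f k - s) := contract k
      _ ≤ (1 - K⁻¹) * ((f 0 - s) * (1 - K⁻¹) ^ k) := by gcongr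
      _ = (f 0 - s) * (1 - K⁻¹) ^ (k + 1) := by ring

variable {E : Type*} [PseudoMetricSpace E] {z : ℕ → E} {z' : E} {c : ℝ}

theorem dist_succ_le_geometric_of_sufficient_decrease (hc : 0 < c) (hK : 1 ≤ K)
    (hbdd : BddBelow (Set.range f))
    (hdecrease : ∀ k, c * dist (z k) (z (k + 1)) ^ 2 ≤ f k - f (k + 1))
    (hgap : ∀ k, |f k - s| ≤ K * (f k - f (k + 1))) (k : ℕ) :
    dist (z k) (z (k + 1)) ≤ √((f 0 - s) / c) * √(1 - K⁻¹) ^ k := by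
  have hanti : Antitone f := antitone_nat_of_succ_le fun k =>
    sub_nonneg.1 ((by positivity : 0 ≤ c * dist (z k) (z (k + 1)) ^ 2).trans (hdecrease k))
  have hs : ∀ k, s ≤ f k :=
    hanti.le_of_tendsto (tendsto_of_abs_sub_le_mul_decrease hanti hbdd hgap)
  have hrate : 0 ≤ 1 - K⁻¹ := sub_nonneg.2 (inv_le_one_of_one_le₀ hK)
  have hdist : dist (z k) (z (k + 1)) ^ 2 ≤ (f 0 - s) / c * (1 - K⁻¹) ^ k := by
    rw [div_mul_eq_mul_div, le_div_iff₀' hc]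
    calc c * dist (z k) (z (k + 1)) ^ 2 ≤ f k - f (k + 1) := hdecrease k
      _ ≤ f k - s := sub_le_sub_left (hs (k + 1)) _
      _ ≤ (f 0 - s) * (1 - K⁻¹) ^ k :=
        sub_le_geometric_of_sub_le_mul_decrease hK (fun k => (le_abs_self _).trans (hgap k)) k
  refine le_of_sq_le_sq ?_ (by positivity)
  rwa [mul_pow, pow_right_comm, Real.sq_sqrt hrate,
    Real.sq_sqrt (div_nonneg (sub_nonneg.2 (hs 0)) hc.le)]

theorem exists_dist_le_geometric_of_sufficient_decrease (hc : 0 < c)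
    (hz : Tendsto z atTop (nhds z')) (hbdd : BddBelow (Set.range f))
    (hdecrease : ∀ k, c * dist (z k) (z (k + 1)) ^ 2 ≤ f k - f (k + 1))
    (hgap : ∀ k, |f k - s| ≤ K * (f k - f (k + 1))) :
    ∃ σ β : ℝ, 0 ≤ σ ∧ σ < 1 ∧ 0 < β ∧ ∀ k, dist (z k) z' ≤ β * σ ^ k := by
  set L := max K 1
  set σ := √(1 - L⁻¹)
  set C := √((f 0 - s) / c)
  have hL : 1 ≤ L := le_max_right K 1
  have hgapL : ∀ k, |f k - s| ≤ L * (f k - f (k + 1)) := fun k => by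
    have : 0 ≤ f k - f (k + 1) := (by positivity : (0 : ℝ) ≤ _).trans (hdecrease k)
    exact (hgap k).trans (by gcongr; exact le_max_left K 1)
  have hσ : σ < 1 := by
    rw [Real.sqrt_lt' one_pos, one_pow, sub_lt_self_iff]
    positivity
  have : 0 < 1 - σ := sub_pos.2 hσ
  have hstep := dist_succ_le_geometric_of_sufficient_decrease hc hL hbdd hdecrease hgapL
  refine ⟨σ, C / (1 - σ) + 1, Real.sqrt_nonneg _, hσ, by positivity, fun k => ?_⟩
  calc dist (z k) z' ≤ C * σ ^ k / (1 - σ) := dist_le_of_le_geometric_of_tendsto σ C hσ hstep hz k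
    _ = C / (1 - σ) * σ ^ k := by ring
    _ ≤ (C / (1 - σ) + 1) * σ ^ k := by gcongr; exact le_add_of_nonneg_right zero_le_one

end DescentSequences

/-- `h` is the optimality condition for `a'` to minimise
`1 / 2 * ‖L v - x‖ ^ 2 + lam / 2 * ‖v - a‖ ^ 2` over `v`. -/
theorem sq_norm_add_mul_sq_norm_sub_le_of_inner_eq {E F : Type*} [SeminormedAddCommGroup E]
    [InnerProductSpace ℝ E] [SeminormedAddCommGroup F] [InnerProductSpace ℝ F]
    (L : E →ₗ[ℝ] F) {x : F} {a a' : E} {lam : ℝ}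
    (h : ∀ v, inner ℝ (L a' - x) (L v) = lam * inner ℝ (a - a') v) :
    ‖L a' - x‖ ^ 2 + 2 * lam * ‖a - a'‖ ^ 2 ≤ ‖L a - x‖ ^ 2 := by
  have hsplit : L a - x = (L a' - x) + L (a - a') := by rw [map_sub]; abel
  rw [hsplit, norm_add_sq_real, h, real_inner_self_eq_norm_sq]
  nlinarith [sq_nonneg ‖L (a - a')‖]

section Frobenius

open scoped Matrix.Norms.Frobenius

section FrobeniusNorm

variable {l m n : Type*} [Fintype l] [Fintype m] [Fintype n]

theorem sq_frobenius_norm {α : Type*} [SeminormedAddCommGroup α] (U : Matrix m n α) :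
    ‖U‖ ^ 2 = ∑ i, ∑ j, ‖U i j‖ ^ 2 := by
  rw [Matrix.frobenius_norm_def, ← Real.sqrt_eq_rpow, Real.sq_sqrt (by positivity)]
  simp only [Real.rpow_two]

theorem frobenius_norm_le_of_forall_le {α β : Type*} [SeminormedAddCommGroup α]
    [SeminormedAddCommGroup β] {U : Matrix m n α} {V : Matrix m n β}
    (h : ∀ i j, ‖U i j‖ ≤ ‖V i j‖) : ‖U‖ ≤ ‖V‖ := by
  rw [Matrix.frobenius_norm_def, Matrix.frobenius_norm_def]
  gcongr with i _ j _
  exact h i j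

/-- Mathlib's `Matrix.frobenius_norm_mul` requires `RCLike` scalars, which excludes the
quaternions. -/
theorem frobenius_norm_mul_le {α : Type*} [NonUnitalSeminormedRing α] (U : Matrix l m α)
    (V : Matrix m n α) : ‖U * V‖ ≤ ‖U‖ * ‖V‖ := by
  refine le_of_sq_le_sq ?_ (by positivity)
  rw [mul_pow, sq_frobenius_norm, sq_frobenius_norm U, sq_frobenius_norm V, Finset.sum_mul]
  refine Finset.sum_le_sum fun i _ => ?_
  rw [Finset.sum_comm (f := fun i j => ‖V i j‖ ^ 2), Finset.mul_sum]
  refine Finset.sum_le_sum fun j _ => ?_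
  calc ‖∑ k, U i k * V k j‖ ^ 2 ≤ (∑ k, ‖U i k‖ * ‖V k j‖) ^ 2 := by
        gcongr
        exact norm_sum_le_of_le _ fun k _ => norm_mul_le _ _
    _ ≤ (∑ k, ‖U i k‖ ^ 2) * ∑ k, ‖V k j‖ ^ 2 := Finset.sum_mul_sq_le_sq_mul_sq _ _ _

/-- The Frobenius inner product on matrices, inducing the Frobenius norm. It is a local instance,
as there are several natural norms on matrices. -/
noncomputable abbrev frobeniusInnerProductSpace {𝕜 α : Type*} [RCLike 𝕜] [SeminormedAddCommGroup α]
    [InnerProductSpace 𝕜 α] : InnerProductSpace 𝕜 (Matrix m n α) where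
  inner U V := ∑ i, ∑ j, inner 𝕜 (U i j) (V i j)
  norm_sq_eq_re_inner U := by simp [sq_frobenius_norm]
  conj_inner_symm U V := by simp [map_sum]
  add_left U V W := by simp [inner_add_left, Finset.sum_add_distrib]
  smul_left U V c := by simp [inner_smul_left, Finset.mul_sum]

attribute [local instance] frobeniusInnerProductSpace

theorem frobenius_inner_def {𝕜 α : Type*} [RCLike 𝕜] [SeminormedAddCommGroup α]
    [InnerProductSpace 𝕜 α] (U V : Matrix m n α) :
    inner 𝕜 U V = ∑ i, ∑ j, inner 𝕜 (U i j) (V i j) :=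
  rfl

theorem frobenius_inner_mul_right (U : Matrix l n ℍ[ℝ]) (V : Matrix l m ℍ[ℝ])
    (B : Matrix m n ℍ[ℝ]) : inner ℝ U (V * B) = inner ℝ (U * Bᴴ) V := by
  simp only [frobenius_inner_def, Matrix.mul_apply, inner_sum, sum_inner]
  refine Finset.sum_congr rfl fun i _ => ?_
  rw [Finset.sum_comm]
  simp [Quaternion.inner_def, mul_assoc]

theorem frobenius_inner_conjTranspose (U V : Matrix m n ℍ[ℝ]) :
    inner ℝ Uᴴ Vᴴ = inner ℝ U V := by
  have inner_star (a b : ℍ[ℝ]) : inner ℝ (star a) (star b) = inner ℝ a b := by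
    simp only [Quaternion.inner_def, star_star, Quaternion.re_mul, Quaternion.re_star,
      Quaternion.imI_star, Quaternion.imJ_star, Quaternion.imK_star]
    ring
  rw [frobenius_inner_def, frobenius_inner_def, Finset.sum_comm]
  simp only [Matrix.conjTranspose_apply, inner_star]

theorem frobenius_inner_mul_left (U : Matrix l n ℍ[ℝ]) (A : Matrix l m ℍ[ℝ])
    (V : Matrix m n ℍ[ℝ]) : inner ℝ U (A * V) = inner ℝ (Aᴴ * U) V := by
  rw [← frobenius_inner_conjTranspose, Matrix.conjTranspose_mul, frobenius_inner_mul_right,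
    ← Matrix.conjTranspose_mul, frobenius_inner_conjTranspose]

theorem isUnit_mul_conjTranspose_add_smul_one [DecidableEq m] (B : Matrix m n ℍ[ℝ]) {lam : ℝ}
    (hlam : 0 < lam) : IsUnit (B * Bᴴ + lam • (1 : Matrix m m ℍ[ℝ])) := by
  have : IsArtinianRing (Matrix m m ℍ[ℝ]) := IsArtinianRing.of_finite ℝ _
  rw [IsArtinianRing.isUnit_iff_isRightRegular, isRightRegular_iff_left_eq_zero_of_mul]
  intro W hW
  have hquad : ‖W * B‖ ^ 2 + lam * ‖W‖ ^ 2 = 0 := by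
    calc ‖W * B‖ ^ 2 + lam * ‖W‖ ^ 2
        = inner ℝ (W * (B * Bᴴ + lam • (1 : Matrix m m ℍ[ℝ]))) W := by
          rw [Matrix.mul_add, ← Matrix.mul_assoc, Matrix.mul_smul, Matrix.mul_one, inner_add_left,
            ← frobenius_inner_mul_right, real_inner_smul_left, real_inner_self_eq_norm_sq,
            real_inner_self_eq_norm_sq]
      _ = 0 := by rw [hW, inner_zero_left]
  have : lam * ‖W‖ ^ 2 = 0 := by nlinarith [sq_nonneg ‖W * B‖, mul_nonneg hlam.le (sq_nonneg ‖W‖)]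
  simpa [hlam.ne'] using this

theorem norm_mul_sub_mul_le {α : Type*} [NonUnitalSeminormedRing α] {U U' : Matrix l m α}
    {V V' : Matrix m n α} {M : ℝ} (hV : ‖V‖ ≤ M) (hU' : ‖U'‖ ≤ M) :
    ‖U * V - U' * V'‖ ≤ M * (‖U - U'‖ + ‖V - V'‖) := by
  calc ‖U * V - U' * V'‖ = ‖(U - U') * V + U' * (V - V')‖ := by
        rw [Matrix.sub_mul, Matrix.mul_sub, sub_add_sub_cancel]
    _ ≤ ‖U - U'‖ * ‖V‖ + ‖U'‖ * ‖V - V'‖ :=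
        norm_add_le_of_le (frobenius_norm_mul_le _ _) (frobenius_norm_mul_le _ _)
    _ ≤ ‖U - U'‖ * M + M * ‖V - V'‖ := by gcongr
    _ = M * (‖U - U'‖ + ‖V - V'‖) := by ring

end FrobeniusNorm

section FactorUpdates

variable {m r n : Type*} [Fintype r]
  {A A' : Matrix m r ℍ[ℝ]} {B B' : Matrix r n ℍ[ℝ]} {X : Matrix m n ℍ[ℝ]} {lam : ℝ}

theorem left_normal_equation [Fintype n] [DecidableEq r] (hlam : 0 < lam)
    (hA' : A' = (X * Bᴴ + lam • A) * Ring.inverse (B * Bᴴ + lam • (1 : Matrix r r ℍ[ℝ]))) :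
    (A' * B - X) * Bᴴ = lam • (A - A') := by
  have hsolve : A' * (B * Bᴴ + lam • (1 : Matrix r r ℍ[ℝ])) = X * Bᴴ + lam • A := by
    rw [hA', Matrix.mul_assoc,
      Ring.inverse_mul_cancel _ (isUnit_mul_conjTranspose_add_smul_one B hlam), Matrix.mul_one]
  rw [Matrix.mul_add, Matrix.mul_smul, Matrix.mul_one, ← Matrix.mul_assoc] at hsolve
  rw [Matrix.sub_mul, smul_sub, sub_eq_sub_iff_add_eq_add, hsolve, add_comm]

theorem right_normal_equation [Fintype m] [DecidableEq r] (hlam : 0 < lam)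
    (hB' : B' = Ring.inverse (Aᴴ * A + lam • (1 : Matrix r r ℍ[ℝ])) * (Aᴴ * X + lam • B)) :
    Aᴴ * (A * B' - X) = lam • (B - B') := by
  have hunit : IsUnit (Aᴴ * A + lam • (1 : Matrix r r ℍ[ℝ])) := by
    simpa only [Matrix.conjTranspose_conjTranspose] using
      isUnit_mul_conjTranspose_add_smul_one Aᴴ hlam
  have hsolve : (Aᴴ * A + lam • (1 : Matrix r r ℍ[ℝ])) * B' = Aᴴ * X + lam • B := by
    rw [hB', ← Matrix.mul_assoc, Ring.mul_inverse_cancel _ hunit, Matrix.one_mul]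
  rw [Matrix.add_mul, Matrix.smul_mul, Matrix.one_mul, Matrix.mul_assoc] at hsolve
  rw [Matrix.mul_sub, smul_sub, sub_eq_sub_iff_add_eq_add, hsolve, add_comm]

variable [Fintype m] [Fintype n]

attribute [local instance] frobeniusInnerProductSpace

theorem left_update_decrease (h : (A' * B - X) * Bᴴ = lam • (A - A')) :
    ‖A' * B - X‖ ^ 2 + 2 * lam * ‖A - A'‖ ^ 2 ≤ ‖A * B - X‖ ^ 2 :=
  sq_norm_add_mul_sq_norm_sub_le_of_inner_eq (mulRightLinearMap m ℝ B) fun V => by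
    rw [mulRightLinearMap_apply, mulRightLinearMap_apply, frobenius_inner_mul_right,
      h, real_inner_smul_left]

theorem right_update_decrease (h : Aᴴ * (A * B' - X) = lam • (B - B')) :
    ‖A * B' - X‖ ^ 2 + 2 * lam * ‖B - B'‖ ^ 2 ≤ ‖A * B - X‖ ^ 2 :=
  sq_norm_add_mul_sq_norm_sub_le_of_inner_eq (mulLeftLinearMap n ℝ A) fun V => by
    rw [mulLeftLinearMap_apply, mulLeftLinearMap_apply, frobenius_inner_mul_left,
      h, real_inner_smul_left]

end FactorUpdates

/-- The objective `f (A, B, X) = ½ ‖A * B - X‖²` (in the Frobenius norm) that the LRQD iteration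
minimises. -/
noncomputable def fitLoss {m r n : Type*} [Fintype m] [Fintype r] [Fintype n]
    (A : Matrix m r ℍ[ℝ]) (B : Matrix r n ℍ[ℝ]) (X : Matrix m n ℍ[ℝ]) : ℝ :=
  1 / 2 * ‖A * B - X‖ ^ 2

theorem fitLoss_nonneg {m r n : Type*} [Fintype m] [Fintype r] [Fintype n] (A : Matrix m r ℍ[ℝ])
    (B : Matrix r n ℍ[ℝ]) (X : Matrix m n ℍ[ℝ]) : 0 ≤ fitLoss A B X := by
  unfold fitLoss
  positivity

/-- The sequences `A`, `B`, `X` satisfy the LRQD recurrences with data `D` observed on `Ω` and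
proximal parameter `lam`. -/
structure IsLRQD {m r n : Type*} [Fintype m] [Fintype r] [DecidableEq r] [Fintype n]
    (D : Matrix m n ℍ[ℝ]) (Ω : Set (m × n)) (lam : ℝ) (A : ℕ → Matrix m r ℍ[ℝ])
    (B : ℕ → Matrix r n ℍ[ℝ]) (X : ℕ → Matrix m n ℍ[ℝ]) : Prop where
  eq_data : ∀ k, ∀ p ∈ Ω, X k p.1 p.2 = D p.1 p.2
  eq_mul : ∀ k, ∀ p : m × n, p ∉ Ω → X k p.1 p.2 = (A k * B k) p.1 p.2
  left_update : ∀ k, A (k + 1) = (X k * (B k)ᴴ + lam • A k) *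
    Ring.inverse (B k * (B k)ᴴ + lam • (1 : Matrix r r ℍ[ℝ]))
  right_update : ∀ k, B (k + 1) =
    Ring.inverse ((A (k + 1))ᴴ * A (k + 1) + lam • (1 : Matrix r r ℍ[ℝ])) *
      ((A (k + 1))ᴴ * X k + lam • B k)

namespace IsLRQD

variable {m r n : Type*} [Fintype m] [Fintype r] [DecidableEq r] [Fintype n]
  {D : Matrix m n ℍ[ℝ]} {Ω : Set (m × n)} {lam M : ℝ} {A : ℕ → Matrix m r ℍ[ℝ]}
  {B : ℕ → Matrix r n ℍ[ℝ]} {X : ℕ → Matrix m n ℍ[ℝ]}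

theorem residual_succ_le (h : IsLRQD D Ω lam A B X) (k : ℕ) :
    ‖A (k + 1) * B (k + 1) - X (k + 1)‖ ≤ ‖A (k + 1) * B (k + 1) - X k‖ := by
  refine frobenius_norm_le_of_forall_le fun i j => ?_
  by_cases hij : (i, j) ∈ Ω
  · rw [Matrix.sub_apply, Matrix.sub_apply, h.eq_data (k + 1) _ hij, h.eq_data k _ hij]
  · rw [Matrix.sub_apply, h.eq_mul (k + 1) _ hij, sub_self, norm_zero]
    exact norm_nonneg _

theorem norm_sub_succ_le (h : IsLRQD D Ω lam A B X) (k : ℕ) :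
    ‖X k - X (k + 1)‖ ≤ ‖A k * B k - A (k + 1) * B (k + 1)‖ := by
  refine frobenius_norm_le_of_forall_le fun i j => ?_
  by_cases hij : (i, j) ∈ Ω
  · rw [Matrix.sub_apply, h.eq_data (k + 1) _ hij, h.eq_data k _ hij, sub_self, norm_zero]
    exact norm_nonneg _
  · rw [Matrix.sub_apply, Matrix.sub_apply, h.eq_mul (k + 1) _ hij, h.eq_mul k _ hij]

theorem fitLoss_decrease (h : IsLRQD D Ω lam A B X) (hlam : 0 < lam) (k : ℕ) :
    lam * (‖A k - A (k + 1)‖ ^ 2 + ‖B k - B (k + 1)‖ ^ 2) ≤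
      fitLoss (A k) (B k) (X k) - fitLoss (A (k + 1)) (B (k + 1)) (X (k + 1)) := by
  have hA := left_update_decrease (left_normal_equation hlam (h.left_update k))
  have hB := right_update_decrease (right_normal_equation hlam (h.right_update k))
  have hX := pow_le_pow_left₀ (norm_nonneg _) (h.residual_succ_le k) 2
  rw [fitLoss, fitLoss]
  linarith

theorem norm_left_gradient_le (h : IsLRQD D Ω lam A B X) (hlam : 0 < lam) {k : ℕ}
    (hB : ‖B k‖ ≤ M) :
    ‖(A k * B k - X k) * (B k)ᴴ‖ ≤ (lam + M ^ 2) * ‖A k - A (k + 1)‖ := by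
  have hsplit : (A k * B k - X k) * (B k)ᴴ =
      lam • (A k - A (k + 1)) + (A k - A (k + 1)) * B k * (B k)ᴴ := by
    rw [← left_normal_equation hlam (h.left_update k), ← Matrix.add_mul, Matrix.sub_mul (A k)]
    congr 1
    abel
  have hquad : ‖(A k - A (k + 1)) * B k * (B k)ᴴ‖ ≤ ‖A k - A (k + 1)‖ * M * M := by
    have hM : 0 ≤ M := (norm_nonneg _).trans hB
    calc ‖(A k - A (k + 1)) * B k * (B k)ᴴ‖ ≤ ‖(A k - A (k + 1)) * B k‖ * ‖B k‖ :=
          (frobenius_norm_mul_le _ _).trans_eq (by rw [Matrix.frobenius_norm_conjTranspose])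
      _ ≤ ‖A k - A (k + 1)‖ * ‖B k‖ * ‖B k‖ := by gcongr; exact frobenius_norm_mul_le _ _
      _ ≤ ‖A k - A (k + 1)‖ * M * M := by gcongr
  calc ‖(A k * B k - X k) * (B k)ᴴ‖
      ≤ ‖lam • (A k - A (k + 1))‖ + ‖(A k - A (k + 1)) * B k * (B k)ᴴ‖ :=
        hsplit ▸ norm_add_le _ _
    _ ≤ lam * ‖A k - A (k + 1)‖ + ‖A k - A (k + 1)‖ * M * M := by
        rw [norm_smul, Real.norm_of_nonneg hlam.le]
        gcongr
    _ = (lam + M ^ 2) * ‖A k - A (k + 1)‖ := by ring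

theorem norm_right_gradient_le (h : IsLRQD D Ω lam A B X) (hlam : 0 < lam)
    (hA : ∀ k, ‖A k‖ ≤ M) {k : ℕ} (hB : ‖B k‖ ≤ M) (hX : ‖X k‖ ≤ M) :
    ‖(A k)ᴴ * (A k * B k - X k)‖ ≤
      (lam + 2 * M ^ 2 + M) * (‖A k - A (k + 1)‖ + ‖B k - B (k + 1)‖) := by
  set a := ‖A k - A (k + 1)‖
  set b := ‖B k - B (k + 1)‖
  have hM : 0 ≤ M := (norm_nonneg _).trans (hA k)
  have hsplit : (A k)ᴴ * (A k * B k - X k) =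
      lam • (B k - B (k + 1)) + (A k - A (k + 1))ᴴ * (A k * B k - X k) +
        (A (k + 1))ᴴ * (A k * B k - A (k + 1) * B (k + 1)) := by
    rw [← right_normal_equation hlam (h.right_update k), Matrix.conjTranspose_sub]
    simp only [Matrix.sub_mul, Matrix.mul_sub]
    abel
  have hresidual : ‖A k * B k - X k‖ ≤ M * M + M :=
    norm_sub_le_of_le ((frobenius_norm_mul_le _ _).trans
      (mul_le_mul (hA k) hB (norm_nonneg _) hM)) hX
  have hproduct : ‖A k * B k - A (k + 1) * B (k + 1)‖ ≤ M * (a + b) :=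
    norm_mul_sub_mul_le hB (hA (k + 1))
  calc ‖(A k)ᴴ * (A k * B k - X k)‖
      ≤ ‖lam • (B k - B (k + 1))‖ + ‖(A k - A (k + 1))ᴴ‖ * ‖A k * B k - X k‖ +
          ‖(A (k + 1))ᴴ‖ * ‖A k * B k - A (k + 1) * B (k + 1)‖ := by
        rw [hsplit]
        exact norm_add_le_of_le (norm_add_le_of_le le_rfl (frobenius_norm_mul_le _ _))
          (frobenius_norm_mul_le _ _)
    _ ≤ lam * b + a * (M * M + M) + M * (M * (a + b)) := by
        rw [norm_smul, Real.norm_of_nonneg hlam.le, Matrix.frobenius_norm_conjTranspose,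
          Matrix.frobenius_norm_conjTranspose]
        gcongr
        exact hA (k + 1)
    _ ≤ (lam + 2 * M ^ 2 + M) * (a + b) := by
        have : 0 ≤ lam * a + (M ^ 2 + M) * b := by positivity
        linarith

end IsLRQD

section FinIndexed

variable {m r n : ℕ}

theorem frob_eq_norm (U : Matrix (Fin m) (Fin n) ℍ[ℝ]) : frob U = ‖U‖ := by
  rw [frob, ← sq_frobenius_norm, Real.sqrt_sq (norm_nonneg U)]

theorem half_mul_sq_frob_eq_fitLoss (A : Matrix (Fin m) (Fin r) ℍ[ℝ])
    (B : Matrix (Fin r) (Fin n) ℍ[ℝ]) (X : Matrix (Fin m) (Fin n) ℍ[ℝ]) :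
    1 / 2 * frob (A * B - X) ^ 2 = fitLoss A B X := by
  rw [frob_eq_norm, fitLoss]

theorem tnorm_sub_eq_dist (A A' : Matrix (Fin m) (Fin r) ℍ[ℝ]) (B B' : Matrix (Fin r) (Fin n) ℍ[ℝ])
    (X X' : Matrix (Fin m) (Fin n) ℍ[ℝ]) :
    tnorm (A - A') (B - B') (X - X') =
      dist (WithLp.toLp 2 (A, WithLp.toLp 2 (B, X)))
        (WithLp.toLp 2 (A', WithLp.toLp 2 (B', X'))) := by
  rw [WithLp.prod_dist_eq_of_L2, WithLp.prod_dist_eq_of_L2, Real.sq_sqrt (by positivity), tnorm]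
  simp only [frob_eq_norm, dist_eq_norm, add_assoc, WithLp.toLp_fst, WithLp.toLp_snd]

theorem exists_tnorm_le_geometric_of_sufficient_decrease {A : ℕ → Matrix (Fin m) (Fin r) ℍ[ℝ]}
    {B : ℕ → Matrix (Fin r) (Fin n) ℍ[ℝ]} {X : ℕ → Matrix (Fin m) (Fin n) ℍ[ℝ]}
    {A' : Matrix (Fin m) (Fin r) ℍ[ℝ]} {B' : Matrix (Fin r) (Fin n) ℍ[ℝ]}
    {X' : Matrix (Fin m) (Fin n) ℍ[ℝ]} {f : ℕ → ℝ} {s c K : ℝ} (hc : 0 < c)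
    (hlim : Tendsto (fun k => tnorm (A k - A') (B k - B') (X k - X')) atTop (nhds 0))
    (hbdd : BddBelow (Set.range f))
    (hdecrease : ∀ k, c * tnorm (A k - A (k + 1)) (B k - B (k + 1)) (X k - X (k + 1)) ^ 2 ≤
      f k - f (k + 1))
    (hgap : ∀ k, |f k - s| ≤ K * (f k - f (k + 1))) :
    ∃ σ β : ℝ, 0 ≤ σ ∧ σ < 1 ∧ 0 < β ∧
      ∀ k, tnorm (A k - A') (B k - B') (X k - X') ≤ β * σ ^ k := by
  simp only [tnorm_sub_eq_dist] at hlim hdecrease ⊢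
  exact exists_dist_le_geometric_of_sufficient_decrease hc (tendsto_iff_dist_tendsto_zero.2 hlim)
    hbdd hdecrease hgap

namespace IsLRQD

variable {D : Matrix (Fin m) (Fin n) ℍ[ℝ]} {Ω : Set (Fin m × Fin n)} {lam M : ℝ}
  {A : ℕ → Matrix (Fin m) (Fin r) ℍ[ℝ]} {B : ℕ → Matrix (Fin r) (Fin n) ℍ[ℝ]}
  {X : ℕ → Matrix (Fin m) (Fin n) ℍ[ℝ]}

theorem mul_sq_tnorm_le_fitLoss_decrease (h : IsLRQD D Ω lam A B X) (hlam : 0 < lam)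
    (hA : ∀ k, frob (A k) ≤ M) (hB : ∀ k, frob (B k) ≤ M) (k : ℕ) :
    lam / (1 + 2 * M ^ 2) *
        tnorm (A k - A (k + 1)) (B k - B (k + 1)) (X k - X (k + 1)) ^ 2 ≤
      fitLoss (A k) (B k) (X k) - fitLoss (A (k + 1)) (B (k + 1)) (X (k + 1)) := by
  simp only [frob_eq_norm] at hA hB
  refine le_trans ?_ (h.fitLoss_decrease hlam k)
  have hX : ‖X k - X (k + 1)‖ ^ 2 ≤
      M ^ 2 * (2 * (‖A k - A (k + 1)‖ ^ 2 + ‖B k - B (k + 1)‖ ^ 2)) := by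
    grw [h.norm_sub_succ_le k, norm_mul_sub_mul_le (hB k) (hA (k + 1)), mul_pow, add_sq_le]
  rw [tnorm, Real.sq_sqrt (by positivity), div_mul_eq_mul_div, div_le_iff₀ (by positivity),
    mul_assoc]
  simp only [frob_eq_norm]
  gcongr
  linarith

variable [DecidablePred (· ∈ Ω)]

theorem sq_pgnorm_eq (h : IsLRQD D Ω lam A B X) (k : ℕ) :
    pgnorm Ω (A k) (B k) (X k) ^ 2 =
      ‖(A k * B k - X k) * (B k)ᴴ‖ ^ 2 + ‖(A k)ᴴ * (A k * B k - X k)‖ ^ 2 := by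
  have hoff : (∑ p : Fin m × Fin n, if p ∈ Ω then 0 else ‖(X k - A k * B k) p.1 p.2‖ ^ 2) = 0 :=
    Finset.sum_eq_zero fun p _ => by
      split_ifs with hp
      · rfl
      · rw [Matrix.sub_apply, h.eq_mul k p hp, sub_self, norm_zero, zero_pow two_ne_zero]
  rw [pgnorm, hoff, add_zero, Real.sq_sqrt (by positivity), frob_eq_norm, frob_eq_norm]

theorem sq_pgnorm_le_fitLoss_decrease (h : IsLRQD D Ω lam A B X) (hlam : 0 < lam)
    (hA : ∀ k, frob (A k) ≤ M) (hB : ∀ k, frob (B k) ≤ M) (hX : ∀ k, frob (X k) ≤ M) (k : ℕ) :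
    pgnorm Ω (A k) (B k) (X k) ^ 2 ≤ 4 * (lam + 2 * M ^ 2 + M) ^ 2 / lam *
      (fitLoss (A k) (B k) (X k) - fitLoss (A (k + 1)) (B (k + 1)) (X (k + 1))) := by
  simp only [frob_eq_norm] at hA hB hX
  set a := ‖A k - A (k + 1)‖
  set b := ‖B k - B (k + 1)‖
  set C := lam + 2 * M ^ 2 + M
  have hM : 0 ≤ M := (norm_nonneg _).trans (hA k)
  have hleft : ‖(A k * B k - X k) * (B k)ᴴ‖ ≤ C * (a + b) := by
    refine (h.norm_left_gradient_le hlam (hB k)).trans ?_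
    gcongr
    · simp only [C]
      nlinarith
    · exact le_add_of_nonneg_right (norm_nonneg _)
  have hright : ‖(A k)ᴴ * (A k * B k - X k)‖ ≤ C * (a + b) :=
    h.norm_right_gradient_le hlam hA (hB k) (hX k)
  calc pgnorm Ω (A k) (B k) (X k) ^ 2
      ≤ (C * (a + b)) ^ 2 + (C * (a + b)) ^ 2 := by rw [h.sq_pgnorm_eq]; gcongr
    _ = 2 * C ^ 2 * (a + b) ^ 2 := by ring
    _ ≤ 2 * C ^ 2 * (2 * (a ^ 2 + b ^ 2)) := by gcongr; exact add_sq_le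
    _ = 4 * C ^ 2 / lam * (lam * (a ^ 2 + b ^ 2)) := by field_simp; ring
    _ ≤ _ := by gcongr; exact h.fitLoss_decrease hlam k

theorem abs_fitLoss_sub_le_mul_decrease (h : IsLRQD D Ω lam A B X) (hlam : 0 < lam)
    (hA : ∀ k, frob (A k) ≤ M) (hB : ∀ k, frob (B k) ≤ M) (hX : ∀ k, frob (X k) ≤ M) {s μ : ℝ}
    {k : ℕ} (hKL : |fitLoss (A k) (B k) (X k) - s| ^ ((1 : ℝ) / 2) ≤
      μ * pgnorm Ω (A k) (B k) (X k)) :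
    |fitLoss (A k) (B k) (X k) - s| ≤ μ ^ 2 * (4 * (lam + 2 * M ^ 2 + M) ^ 2 / lam) *
      (fitLoss (A k) (B k) (X k) - fitLoss (A (k + 1)) (B (k + 1)) (X (k + 1))) := by
  rw [← Real.sqrt_eq_rpow] at hKL
  calc |fitLoss (A k) (B k) (X k) - s| ≤ (μ * pgnorm Ω (A k) (B k) (X k)) ^ 2 :=
        (Real.sqrt_le_left ((Real.sqrt_nonneg _).trans hKL)).1 hKL
    _ = μ ^ 2 * pgnorm Ω (A k) (B k) (X k) ^ 2 := mul_pow _ _ _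
    _ ≤ μ ^ 2 * (4 * (lam + 2 * M ^ 2 + M) ^ 2 / lam * _) := by
        gcongr
        exact h.sq_pgnorm_le_fitLoss_decrease hlam hA hB hX k
    _ = _ := (mul_assoc _ _ _).symm

end IsLRQD

end FinIndexed

end Frobenius

/-- R-linear convergence of the LRQD sequence under the KL inequality with
exponent θ = 1/2. -/
theorem LRQD_linear_rate {m r n : ℕ}
    (D : Matrix (Fin m) (Fin n) ℍ[ℝ]) (Ω : Set (Fin m × Fin n)) [DecidablePred (· ∈ Ω)]
    (lam : ℝ) (hlam : 0 < lam)
    (A : ℕ → Matrix (Fin m) (Fin r) ℍ[ℝ]) (B : ℕ → Matrix (Fin r) (Fin n) ℍ[ℝ])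
    (X : ℕ → Matrix (Fin m) (Fin n) ℍ[ℝ])
    (hXin : ∀ k, ∀ p ∈ Ω, X k p.1 p.2 = D p.1 p.2)
    (hXout : ∀ k, ∀ p : Fin m × Fin n, p ∉ Ω → X k p.1 p.2 = (A k * B k) p.1 p.2)
    (hA : ∀ k, A (k + 1) = (X k * (B k)ᴴ + lam • A k) *
      Ring.inverse (B k * (B k)ᴴ + lam • (1 : Matrix (Fin r) (Fin r) ℍ[ℝ])))
    (hB : ∀ k, B (k + 1) =
      Ring.inverse ((A (k + 1))ᴴ * A (k + 1) + lam • (1 : Matrix (Fin r) (Fin r) ℍ[ℝ])) *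
      ((A (k + 1))ᴴ * X k + lam • B k))
    (hbdd : ∃ M : ℝ, ∀ k, frob (A k) ≤ M ∧ frob (B k) ≤ M ∧ frob (X k) ≤ M)
    (Asharp : Matrix (Fin m) (Fin r) ℍ[ℝ]) (Bsharp : Matrix (Fin r) (Fin n) ℍ[ℝ])
    (Xsharp : Matrix (Fin m) (Fin n) ℍ[ℝ])
    (hconv : Tendsto (fun k => tnorm (A k - Asharp) (B k - Bsharp) (X k - Xsharp))
      atTop (nhds 0))
    (μ : ℝ) (hμ : 0 < μ)
    (hKL : ∀ k, |(1 / 2) * frob (A k * B k - X k) ^ 2 -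
        (1 / 2) * frob (Asharp * Bsharp - Xsharp) ^ 2| ^ ((1 : ℝ) / 2) ≤
      μ * pgnorm Ω (A k) (B k) (X k)) :
    ∃ σ β : ℝ, 0 ≤ σ ∧ σ < 1 ∧ 0 < β ∧
      ∀ k, tnorm (A k - Asharp) (B k - Bsharp) (X k - Xsharp) ≤ β * σ ^ k := by
  obtain ⟨M, hM⟩ := hbdd
  have h : IsLRQD D Ω lam A B X := ⟨hXin, hXout, hA, hB⟩
  have hMA : ∀ k, frob (A k) ≤ M := fun k => (hM k).1
  have hMB : ∀ k, frob (B k) ≤ M := fun k => (hM k).2.1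
  have hMX : ∀ k, frob (X k) ≤ M := fun k => (hM k).2.2
  simp only [half_mul_sq_frob_eq_fitLoss] at hKL
  exact exists_tnorm_le_geometric_of_sufficient_decrease (by positivity) hconv
    ⟨0, Set.forall_mem_range.2 fun k => fitLoss_nonneg (A k) (B k) (X k)⟩
    (h.mul_sq_tnorm_le_fitLoss_decrease hlam hMA hMB)
    (fun k => h.abs_fitLoss_sub_le_mul_decrease hlam hMA hMB hMX (hKL k))
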